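/- Let n ≥ 3 and let x_1, …, x_n be distinct real numbers. Then there exists a unique θ̂ ∈ ℍ such that Q(θ̂) = θ̂. Moreover, this θ̂ is the unique maximizer of the Cauchy likelihood on ℍ: L(θ) ≤ L(θ̂) for every θ ∈ ℍ, with equality only for θ = θ̂. -/

import Mathlib

open Complex Finset

/-- The Cauchy likelihood of the sample `x` at parameter `θ = μ + iσ`. -/
noncomputable def cauchyL {n : ℕ} (x : Fin n → ℝ) (θ : ℂ) : ℝ :=
  ∏ j, (θ.im / Real.pi) / ((x j - θ.re) ^ 2 + θ.im ^ 2)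

/-- The polynomial `h(θ) = ∏ (x_j − θ)`. -/
noncomputable def hpoly {n : ℕ} (x : Fin n → ℝ) : ℂ → ℂ :=
  fun θ => ∏ j, ((x j : ℂ) - θ)

/-- `q(θ) = θ − n·h(θ)/h'(θ)`. -/
noncomputable def qmap {n : ℕ} (x : Fin n → ℝ) : ℂ → ℂ :=
  fun θ => θ - (n : ℂ) * hpoly x θ / deriv (hpoly x) θ

/-- `Q = q ∘ q`. -/
noncomputable def Qmap {n : ℕ} (x : Fin n → ℝ) : ℂ → ℂ :=
  fun θ => qmap x (qmap x θ)


lemma aux_ne {a : ℂ} (ha : a.im ≠ 0) (t : ℝ) : a - (t : ℂ) ≠ 0 := by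
  intro h
  apply ha
  have := congrArg Complex.im h
  simpa using this

lemma aux_ne' {a : ℂ} (ha : a.im ≠ 0) (t : ℝ) : (t : ℂ) - a ≠ 0 := by
  intro h
  exact aux_ne ha t (by rw [← neg_sub, h, neg_zero])

lemma qmap_eq {n : ℕ} (x : Fin n → ℝ) {a : ℂ} (ha : a.im ≠ 0) :
    qmap x a = a - n / ∑ j, (a - (x j : ℂ))⁻¹ := by
  have hd : HasDerivAt (hpoly x)
      (∑ i, (∏ j ∈ (Finset.univ : Finset (Fin n)).erase i, ((x j : ℂ) - a)) • (-1 : ℂ)) a := by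
    unfold hpoly
    apply HasDerivAt.fun_finsetProd
    intro i _
    simpa using (hasDerivAt_id a).const_sub (x i : ℂ)
  have h0 : hpoly x a ≠ 0 := by
    unfold hpoly
    exact Finset.prod_ne_zero_iff.mpr fun i _ => aux_ne' ha (x i)
  have hd2 : deriv (hpoly x) a = hpoly x a * ∑ j, (a - (x j : ℂ))⁻¹ := by
    rw [hd.deriv, Finset.mul_sum]
    refine Finset.sum_congr rfl fun i _ => ?_
    unfold hpoly
    rw [← Finset.mul_prod_erase _ _ (Finset.mem_univ i)]
    have h1 := aux_ne' ha (x i)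
    have h2 : (a - (x i : ℂ))⁻¹ = -((x i : ℂ) - a)⁻¹ := by rw [← neg_sub, inv_neg]
    rw [h2]
    field_simp
    simp
  unfold qmap
  rw [hd2, mul_comm (n : ℂ), mul_div_mul_left _ _ h0]

noncomputable def SS {n : ℕ} (x : Fin n → ℝ) (a : ℂ) : ℂ := ∑ j, (a - (x j : ℂ))⁻¹

noncomputable def VV {n : ℕ} (x : Fin n → ℝ) (a : ℂ) : ℝ :=
  ∑ j, normSq ((a - (x j : ℂ))⁻¹) - normSq (SS x a) / n

noncomputable def CC {n : ℕ} (x : Fin n → ℝ) (a b : ℂ) : ℂ :=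
  ∑ j, (a - (x j : ℂ))⁻¹ * (b - (x j : ℂ))⁻¹ - SS x a * SS x b / n

lemma SS_im {n : ℕ} (x : Fin n → ℝ) (a : ℂ) :
    (SS x a).im = -a.im * ∑ j, normSq ((a - (x j : ℂ))⁻¹) := by
  unfold SS
  rw [Complex.im_sum, Finset.mul_sum]
  refine Finset.sum_congr rfl fun i _ => ?_
  rw [Complex.inv_im, map_inv₀]
  simp [div_eq_mul_inv]

lemma SS_ne {n : ℕ} (hn : 3 ≤ n) (x : Fin n → ℝ) {a : ℂ} (ha : a.im ≠ 0) : SS x a ≠ 0 := by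
  intro h
  have h1 := SS_im x a
  rw [h] at h1
  have : 0 < ∑ j, normSq ((a - (x j : ℂ))⁻¹) := by
    apply Finset.sum_pos
    · intro i _
      exact normSq_pos.mpr (inv_ne_zero (aux_ne ha _))
    · exact ⟨⟨0, by omega⟩, Finset.mem_univ _⟩
  have h2 : -a.im * ∑ j, normSq ((a - (x j : ℂ))⁻¹) = 0 := by simpa using h1.symm
  rcases mul_eq_zero.mp h2 with h3 | h3
  · exact ha (by linarith)
  · exact this.ne' h3

lemma q_im {n : ℕ} (hn : 3 ≤ n) (x : Fin n → ℝ) {a : ℂ} (ha : a.im ≠ 0) :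
    (qmap x a).im = -a.im * (n * VV x a / normSq (SS x a)) := by
  rw [qmap_eq x ha]
  change (a - n / SS x a).im = _
  have hs : normSq (SS x a) ≠ 0 := (normSq_pos.mpr (SS_ne hn x ha)).ne'
  have hn0 : (n : ℝ) ≠ 0 := by positivity
  rw [Complex.sub_im, Complex.div_im, SS_im]
  unfold VV
  simp
  field_simp
  ring

lemma q_sub {n : ℕ} (hn : 3 ≤ n) (x : Fin n → ℝ) {a b : ℂ} (ha : a.im ≠ 0) (hb : b.im ≠ 0) :
    qmap x a - qmap x b = -(a - b) * (n * CC x a b / (SS x a * SS x b)) := by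
  rw [qmap_eq x ha, qmap_eq x hb]
  change (a - n / SS x a) - (b - n / SS x b) = _
  have h1 := SS_ne hn x ha
  have h2 := SS_ne hn x hb
  have hn0 : (n : ℂ) ≠ 0 := by norm_cast; omega
  have h3 : SS x a - SS x b = (b - a) * ∑ j, (a - (x j : ℂ))⁻¹ * (b - (x j : ℂ))⁻¹ := by
    unfold SS
    rw [← Finset.sum_sub_distrib, Finset.mul_sum]
    refine Finset.sum_congr rfl fun i _ => ?_
    have := aux_ne ha (x i)
    have := aux_ne hb (x i)
    field_simp
    ring
  have h4 : a - n / SS x a - (b - n / SS x b) = (a - b) + n * (SS x a - SS x b) / (SS x a * SS x b) := by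
    field_simp
    ring
  rw [h4, h3]
  unfold CC
  field_simp
  ring

/-- centered vector -/
noncomputable def uu {n : ℕ} (x : Fin n → ℝ) (a : ℂ) : EuclideanSpace ℂ (Fin n) :=
  WithLp.toLp 2 fun j => (a - (x j : ℂ))⁻¹ - SS x a / n

lemma uu_norm {n : ℕ} (hn : 3 ≤ n) (x : Fin n → ℝ) (a : ℂ) : ‖uu x a‖ ^ 2 = VV x a := by
  rw [EuclideanSpace.norm_sq_eq]
  unfold uu VV
  have hn0 : (n : ℝ) ≠ 0 := by positivity
  have hr : ∑ j, ((a - (x j : ℂ))⁻¹).re = (SS x a).re := by unfold SS; rw [Complex.re_sum]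
  have hi : ∑ j, ((a - (x j : ℂ))⁻¹).im = (SS x a).im := by unfold SS; rw [Complex.im_sum]
  have : ∀ j : Fin n, ‖(a - (x j : ℂ))⁻¹ - SS x a / n‖ ^ 2 =
      normSq ((a - (x j : ℂ))⁻¹) - 2 * ((SS x a).re / n) * ((a - (x j : ℂ))⁻¹).re
        - 2 * ((SS x a).im / n) * ((a - (x j : ℂ))⁻¹).im + normSq (SS x a) / n ^ 2 := by
    intro j
    rw [← Complex.normSq_eq_norm_sq, normSq_apply, normSq_apply, normSq_apply]
    rw [Complex.sub_re, Complex.sub_im, Complex.div_natCast_re, Complex.div_natCast_im]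
    field_simp
    ring
  simp only [this]
  rw [Finset.sum_add_distrib, Finset.sum_sub_distrib, Finset.sum_sub_distrib,
    ← Finset.mul_sum, ← Finset.mul_sum, hr, hi]
  simp
  rw [normSq_apply (SS x a)]
  field_simp
  ring

lemma uu_inner {n : ℕ} (hn : 3 ≤ n) (x : Fin n → ℝ) (a b : ℂ) :
    inner ℂ (uu x ((starRingEnd ℂ) b)) (uu x a) = CC x a b := by
  rw [PiLp.inner_apply]
  unfold uu CC
  have hn0 : (n : ℂ) ≠ 0 := by norm_cast; omega
  have hS : (starRingEnd ℂ) (SS x ((starRingEnd ℂ) b)) = SS x b := by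
    unfold SS; simp
  have : ∀ j : Fin n, ((a - (x j : ℂ))⁻¹ - SS x a / n) * ((b - (x j : ℂ))⁻¹ - SS x b / n)
      = (a - (x j : ℂ))⁻¹ * (b - (x j : ℂ))⁻¹ - (a - (x j : ℂ))⁻¹ * (SS x b / n)
        - (SS x a / n) * (b - (x j : ℂ))⁻¹ + SS x a * SS x b / n ^ 2 := by
    intro j
    field_simp
    ring
  simp [hS]
  simp only [this]
  rw [Finset.sum_add_distrib, Finset.sum_sub_distrib, Finset.sum_sub_distrib,
    ← Finset.mul_sum, ← Finset.sum_mul]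
  change _ - SS x a * _ - _ * SS x b + _ = _
  simp
  field_simp
  ring

lemma VV_conj {n : ℕ} (x : Fin n → ℝ) (b : ℂ) : VV x ((starRingEnd ℂ) b) = VV x b := by
  have hS : SS x ((starRingEnd ℂ) b) = (starRingEnd ℂ) (SS x b) := by
    unfold SS; simp
  unfold VV
  rw [hS, normSq_conj]
  congr 1
  refine Finset.sum_congr rfl fun i _ => ?_
  rw [← normSq_conj]
  simp

/-- no nontrivial affine relation -/
lemma indep {n : ℕ} (hn : 3 ≤ n) (x : Fin n → ℝ) (hx : Function.Injective x) {a b c d : ℂ}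
    (ha : a.im ≠ 0) (hb : b.im ≠ 0) (hab : a ≠ b)
    (h : ∀ j, (a - (x j : ℂ))⁻¹ = c * (b - (x j : ℂ))⁻¹ + d) : False := by
  have key : ∀ j, b - (x j : ℂ) = c * (a - x j) + d * (a - x j) * (b - x j) := by
    intro j
    have h1 := aux_ne ha (x j)
    have h2 := aux_ne hb (x j)
    have := h j
    field_simp at this
    linear_combination this
  have h01 : (x ⟨0, by omega⟩ : ℂ) - x ⟨1, by omega⟩ ≠ 0 := by
    rw [sub_ne_zero]; norm_cast; intro h; have := hx h; simp at this
  have h02 : (x ⟨0, by omega⟩ : ℂ) - x ⟨2, by omega⟩ ≠ 0 := by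
    rw [sub_ne_zero]; norm_cast; intro h; have := hx h; simp at this
  have h12 : (x ⟨1, by omega⟩ : ℂ) - x ⟨2, by omega⟩ ≠ 0 := by
    rw [sub_ne_zero]; norm_cast; intro h; have := hx h; simp at this
  have k0 := key ⟨0, by omega⟩
  have k1 := key ⟨1, by omega⟩
  have k2 := key ⟨2, by omega⟩
  generalize (x ⟨0, by omega⟩ : ℂ) = x0 at *
  generalize (x ⟨1, by omega⟩ : ℂ) = x1 at *
  generalize (x ⟨2, by omega⟩ : ℂ) = x2 at *
  have e1 : -1 = -c + d * (x0 + x1 - a - b) := by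
    apply mul_left_cancel₀ h01; linear_combination k0 - k1
  have e2 : -1 = -c + d * (x0 + x2 - a - b) := by
    apply mul_left_cancel₀ h02; linear_combination k0 - k2
  have hd : d = 0 := by
    have : (x1 - x2) * d = 0 := by linear_combination e2 - e1
    exact (mul_eq_zero.mp this).resolve_left h12
  subst hd
  have hc : c = 1 := by linear_combination e1
  subst hc
  apply hab
  linear_combination -k0

lemma uu_ne {n : ℕ} (hn : 3 ≤ n) (x : Fin n → ℝ) (hx : Function.Injective x) {a : ℂ}
    (ha : a.im ≠ 0) : uu x a ≠ 0 := by
  intro h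
  refine indep hn x hx (b := (starRingEnd ℂ) a) (c := 0) (d := SS x a / n) ha (by simpa) ?_ ?_
  · intro h
    apply ha
    have := congrArg Complex.im h
    simp at this
    linarith
  · intro j
    have : (uu x a) j = 0 := by rw [h]; rfl
    unfold uu at this
    simp at this
    linear_combination this

lemma VV_pos {n : ℕ} (hn : 3 ≤ n) (x : Fin n → ℝ) (hx : Function.Injective x) {a : ℂ}
    (ha : a.im ≠ 0) : 0 < VV x a := by
  rw [← uu_norm hn]
  have := norm_pos_iff.mpr (uu_ne hn x hx ha)
  positivity

lemma CS {n : ℕ} (hn : 3 ≤ n) (x : Fin n → ℝ) (hx : Function.Injective x) {a b : ℂ}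
    (hab : 0 < a.im * b.im) : normSq (CC x a b) < VV x a * VV x b := by
  have ha : a.im ≠ 0 := by rintro h; simp [h] at hab
  have hb : b.im ≠ 0 := by rintro h; simp [h] at hab
  have hb' : ((starRingEnd ℂ) b).im ≠ 0 := by simpa
  rw [← VV_conj x b, ← uu_norm hn, ← uu_norm hn, ← uu_inner hn, Complex.normSq_eq_norm_sq, ← mul_pow]
  apply pow_lt_pow_left₀ _ (norm_nonneg _) two_ne_zero
  rw [mul_comm]
  refine lt_of_le_of_ne (norm_inner_le_norm _ _) fun h => ?_
  rw [norm_inner_eq_norm_iff (uu_ne hn x hx hb') (uu_ne hn x hx ha)] at h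
  obtain ⟨r, -, hr⟩ := h
  refine indep hn x hx (a := a) (b := (starRingEnd ℂ) b) (c := r)
    (d := SS x a / n - r * (SS x ((starRingEnd ℂ) b) / n)) ha hb' ?_ ?_
  · rintro rfl
    simp at hab
    nlinarith [mul_self_nonneg b.im]
  · intro j
    have : (uu x a) j = r * (uu x ((starRingEnd ℂ) b)) j := by rw [hr]; rfl
    unfold uu at this
    simp only at this
    linear_combination this

lemma contract {n : ℕ} (hn : 3 ≤ n) (x : Fin n → ℝ) (hx : Function.Injective x) {a b : ℂ}
    (hab : 0 < a.im * b.im) :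
    0 < (qmap x a).im * (qmap x b).im ∧ (a ≠ b → normSq (qmap x a - qmap x b) * (a.im * b.im) <
      normSq (a - b) * ((qmap x a).im * (qmap x b).im)) := by
  have ha : a.im ≠ 0 := by rintro h; simp [h] at hab
  have hb : b.im ≠ 0 := by rintro h; simp [h] at hab
  have hn0 : (0 : ℝ) < n := by norm_cast; omega
  have hA := normSq_pos.mpr (SS_ne hn x ha)
  have hB := normSq_pos.mpr (SS_ne hn x hb)
  have hVa := VV_pos hn x hx ha
  have hVb := VV_pos hn x hx hb
  have hk : 0 < (n : ℝ) ^ 2 / (normSq (SS x a) * normSq (SS x b)) := by positivity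
  have hm : (qmap x a).im * (qmap x b).im = (a.im * b.im) *
      ((n : ℝ) ^ 2 / (normSq (SS x a) * normSq (SS x b))) * (VV x a * VV x b) := by
    rw [q_im hn x ha, q_im hn x hb]
    field_simp
  have hN : normSq (qmap x a - qmap x b) = normSq (a - b) *
      ((n : ℝ) ^ 2 / (normSq (SS x a) * normSq (SS x b))) * normSq (CC x a b) := by
    rw [q_sub hn x ha hb]
    simp only [map_mul, map_div₀, normSq_neg, normSq_natCast]
    field_simp
  refine ⟨by rw [hm]; positivity, fun hne => ?_⟩
  rw [hm, hN]
  have h0 : 0 < normSq (a - b) := normSq_pos.mpr (sub_ne_zero.mpr hne)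
  have := mul_lt_mul_of_pos_left (CS hn x hx hab) (mul_pos (mul_pos h0 hk) hab)
  linarith

lemma fix_unique {n : ℕ} (hn : 3 ≤ n) (x : Fin n → ℝ) (hx : Function.Injective x) {a b : ℂ}
    (ha : 0 < a.im) (hb : 0 < b.im) (h1 : Qmap x a = a) (h2 : Qmap x b = b) : a = b := by
  by_contra hne
  have hne' : qmap x a ≠ qmap x b := by
    intro h
    apply hne
    rw [← h1, ← h2]
    unfold Qmap
    rw [h]
  obtain ⟨c1, c2⟩ := contract hn x hx (mul_pos ha hb)
  obtain ⟨d1, d2⟩ := contract hn x hx c1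
  have c3 := c2 hne
  have d3 := d2 hne'
  unfold Qmap at h1 h2
  rw [h1, h2] at d3
  linarith

lemma crit_q {n : ℕ} (hn : 3 ≤ n) (x : Fin n → ℝ) {a : ℂ} (ha : a.im ≠ 0)
    (h1 : ∑ j, (x j - a.re) / ((x j - a.re) ^ 2 + a.im ^ 2) = 0)
    (h2 : ∑ j, 2 * a.im ^ 2 / ((x j - a.re) ^ 2 + a.im ^ 2) = (n : ℝ)) :
    qmap x a = (starRingEnd ℂ) a := by
  have hs : SS x a = (⟨0, -(n / (2 * a.im))⟩ : ℂ) := by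
    unfold SS
    apply Complex.ext
    · rw [Complex.re_sum]
      simp only
      rw [← neg_eq_zero, ← h1, ← Finset.sum_neg_distrib]
      refine Finset.sum_congr rfl fun i _ => ?_
      rw [Complex.inv_re, normSq_apply]
      simp
      rw [neg_div', neg_sub]
      congr 1
      ring
    · rw [Complex.im_sum]
      simp only
      rw [← h2, Finset.sum_div, ← Finset.sum_neg_distrib]
      refine Finset.sum_congr rfl fun i _ => ?_
      rw [Complex.inv_im, normSq_apply]
      simp
      have : (a.re - x i) * (a.re - x i) + a.im * a.im = (x i - a.re) ^ 2 + a.im ^ 2 := by ring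
      rw [this]
      have : (x i - a.re) ^ 2 + a.im ^ 2 ≠ 0 := by positivity
      field_simp
  have hn0 : (n : ℝ) ≠ 0 := by positivity
  have hn1 : (n : ℂ) ≠ 0 := by norm_cast; omega
  have hi : (a.im : ℂ) ≠ 0 := by exact_mod_cast ha
  have hs' : SS x a = -(n / (2 * a.im)) * I := by
    rw [hs]
    apply Complex.ext
    · have : (n / (2 * a.im) : ℂ) = ((n / (2 * a.im) : ℝ) : ℂ) := by push_cast; rfl
      rw [this, ← ofReal_neg, Complex.re_ofReal_mul]; simp
    · have : (n / (2 * a.im) : ℂ) = ((n / (2 * a.im) : ℝ) : ℂ) := by push_cast; rfl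
      rw [this, ← ofReal_neg, Complex.im_ofReal_mul]; simp
  rw [qmap_eq x ha]
  change a - n / SS x a = _
  have : (n : ℂ) / SS x a = 2 * a.im * I := by
    rw [hs', div_eq_iff (by simp [hn1, hi])]
    field_simp
    simp
  rw [this]
  apply Complex.ext <;> simp
  ring

lemma crit_Q {n : ℕ} (hn : 3 ≤ n) (x : Fin n → ℝ) {a : ℂ} (ha : a.im ≠ 0)
    (h1 : ∑ j, (x j - a.re) / ((x j - a.re) ^ 2 + a.im ^ 2) = 0)
    (h2 : ∑ j, 2 * a.im ^ 2 / ((x j - a.re) ^ 2 + a.im ^ 2) = (n : ℝ)) :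
    Qmap x a = a := by
  unfold Qmap
  rw [crit_q hn x ha h1 h2, crit_q hn x (a := (starRingEnd ℂ) a) (by simpa) (by simpa) (by simpa)]
  simp

noncomputable def FF {n : ℕ} (x : Fin n → ℝ) (m s : ℝ) : ℝ :=
  ∏ j, s / ((x j - m) ^ 2 + s ^ 2)

lemma cauchyL_eq {n : ℕ} (x : Fin n → ℝ) (a : ℂ) :
    cauchyL x a = (Real.pi⁻¹) ^ n * FF x a.re a.im := by
  unfold cauchyL FF
  have : (Real.pi⁻¹) ^ n = ∏ j : Fin n, Real.pi⁻¹ := by simp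
  rw [this, ← Finset.prod_mul_distrib]
  refine Finset.prod_congr rfl fun i _ => ?_
  ring

lemma log_FF {n : ℕ} (x : Fin n → ℝ) (m : ℝ) {s : ℝ} (hs : 0 < s) :
    Real.log (FF x m s) = ∑ j, (Real.log s - Real.log ((x j - m) ^ 2 + s ^ 2)) := by
  unfold FF
  rw [Real.log_prod (fun i _ => by positivity)]
  refine Finset.sum_congr rfl fun i _ => ?_
  rw [Real.log_div hs.ne' (by positivity)]

lemma FF_pos {n : ℕ} (x : Fin n → ℝ) (m : ℝ) {s : ℝ} (hs : 0 < s) : 0 < FF x m s := by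
  unfold FF
  exact Finset.prod_pos fun i _ => by positivity

lemma max_Q {n : ℕ} (hn : 3 ≤ n) (x : Fin n → ℝ) {m s : ℝ} (hs : 0 < s)
    (h : ∀ m' s' : ℝ, 0 < s' → FF x m' s' ≤ FF x m s) : Qmap x ⟨m, s⟩ = ⟨m, s⟩ := by
  have hl : ∀ m' s' : ℝ, 0 < s' → ∑ j, (Real.log s' - Real.log ((x j - m') ^ 2 + s' ^ 2)) ≤
      ∑ j, (Real.log s - Real.log ((x j - m) ^ 2 + s ^ 2)) := by
    intro m' s' hs'
    rw [← log_FF x m hs, ← log_FF x m' hs']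
    exact Real.log_le_log (FF_pos x m' hs') (h m' s' hs')
  have d1 : HasDerivAt (fun t => ∑ j, (Real.log s - Real.log ((x j - t) ^ 2 + s ^ 2)))
      (∑ j, (-((2 * (x j - m) * (-1)) / ((x j - m) ^ 2 + s ^ 2)))) m := by
    apply HasDerivAt.fun_sum
    intro i _
    have e : HasDerivAt (fun t => (x i - t) ^ 2 + s ^ 2) (2 * (x i - m) * (-1)) m := by
      simpa using (((hasDerivAt_id m).const_sub (x i)).pow 2).add_const (s ^ 2)
    exact (e.log (by positivity)).const_sub _
  have d2 : HasDerivAt (fun t => ∑ j, (Real.log t - Real.log ((x j - m) ^ 2 + t ^ 2)))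
      (∑ j, (s⁻¹ - ((2 * s) / ((x j - m) ^ 2 + s ^ 2)))) s := by
    apply HasDerivAt.fun_sum
    intro i _
    have e : HasDerivAt (fun t => (x i - m) ^ 2 + t ^ 2) (2 * s) s := by
      simpa using ((hasDerivAt_id s).pow 2).const_add ((x i - m) ^ 2)
    exact (Real.hasDerivAt_log hs.ne').sub (e.log (by positivity))
  have m1 : IsLocalMax (fun t => ∑ j, (Real.log s - Real.log ((x j - t) ^ 2 + s ^ 2))) m :=
    Filter.Eventually.of_forall fun t => hl t s hs
  have m2 : IsLocalMax (fun t => ∑ j, (Real.log t - Real.log ((x j - m) ^ 2 + t ^ 2))) s := by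
    filter_upwards [lt_mem_nhds hs] with t ht
    exact hl m t ht
  have z1 := m1.hasDerivAt_eq_zero d1
  have z2 := m2.hasDerivAt_eq_zero d2
  refine crit_Q hn x (a := ⟨m, s⟩) hs.ne' ?_ ?_
  · have : ∑ j, (-((2 * (x j - m) * (-1)) / ((x j - m) ^ 2 + s ^ 2))) =
        2 * ∑ j, (x j - m) / ((x j - m) ^ 2 + s ^ 2) := by
      rw [Finset.mul_sum]
      refine Finset.sum_congr rfl fun i _ => ?_
      ring
    simp only
    linarith
  · rw [Finset.sum_sub_distrib] at z2
    simp at z2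
    have : ∑ j, 2 * s ^ 2 / ((x j - m) ^ 2 + s ^ 2) =
        s * ∑ j, (2 * s) / ((x j - m) ^ 2 + s ^ 2) := by
      rw [Finset.mul_sum]
      refine Finset.sum_congr rfl fun i _ => ?_
      ring
    simp only
    rw [this, ← sub_eq_zero.mp z2]
    field_simp

/-- separation -/
lemma sep {n : ℕ} (x : Fin n → ℝ) (hx : Function.Injective x) :
    ∃ d : ℝ, 0 < d ∧ ∀ i j, i ≠ j → d ≤ |x i - x j| := by
  classical
  have hf : ∀ s : Finset (Fin n × Fin n), ∃ d : ℝ, 0 < d ∧ ∀ p ∈ s, p.1 ≠ p.2 → d ≤ |x p.1 - x p.2| := by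
    intro s
    induction s using Finset.induction_on with
    | empty => exact ⟨1, one_pos, by simp⟩
    | insert p s _ ih =>
      obtain ⟨d, hd, h⟩ := ih
      by_cases hp : p.1 = p.2
      · refine ⟨d, hd, fun q hq hne => ?_⟩
        rcases Finset.mem_insert.mp hq with rfl | hq
        · exact absurd hp hne
        · exact h q hq hne
      · refine ⟨min d |x p.1 - x p.2|, lt_min hd (abs_pos.mpr (sub_ne_zero.mpr (hx.ne hp))), fun q hq hne => ?_⟩
        rcases Finset.mem_insert.mp hq with rfl | hq
        · exact min_le_right _ _
        · exact (min_le_left _ _).trans (h q hq hne)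
  obtain ⟨d, hd, h⟩ := hf Finset.univ
  exact ⟨d, hd, fun i j hij => h (i, j) (Finset.mem_univ _) hij⟩

lemma small_s {n : ℕ} (hn : 3 ≤ n) (x : Fin n → ℝ) (hx : Function.Injective x) :
    ∃ C : ℝ, 0 < C ∧ ∀ m s : ℝ, 0 < s → s ≤ 1 → FF x m s ≤ C * s := by
  obtain ⟨d, hd, h⟩ := sep x hx
  refine ⟨(4 / d ^ 2) ^ (n - 1), by positivity, fun m s hs hs1 => ?_⟩
  have : Nonempty (Fin n) := ⟨⟨0, by omega⟩⟩
  obtain ⟨i, -, hi⟩ := Finset.exists_min_image (Finset.univ : Finset (Fin n)) (fun j => |x j - m|)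
    Finset.univ_nonempty
  have hj : ∀ j ∈ Finset.univ.erase i, s / ((x j - m) ^ 2 + s ^ 2) ≤ 4 / d ^ 2 * s := by
    intro j hj
    have h1 := h j i (Finset.ne_of_mem_erase hj)
    have h2 := hi j (Finset.mem_univ _)
    have h3 : |x j - x i| ≤ |x j - m| + |x i - m| := by
      have := abs_sub (x j - m) (x i - m)
      simpa using this
    have h4 : d ≤ 2 * |x j - m| := by linarith
    have h5 : d ^ 2 ≤ 4 * (x j - m) ^ 2 := by
      rw [← sq_abs (x j - m)]
      nlinarith
    rw [div_mul_eq_mul_div, div_le_div_iff₀ (by positivity) (by positivity)]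
    nlinarith [sq_nonneg s]
  have hii : s / ((x i - m) ^ 2 + s ^ 2) ≤ 1 / s := by
    rw [div_le_div_iff₀ (by positivity) hs]
    nlinarith [sq_nonneg (x i - m)]
  unfold FF
  rw [← Finset.mul_prod_erase _ _ (Finset.mem_univ i)]
  have hp : ∏ j ∈ Finset.univ.erase i, s / ((x j - m) ^ 2 + s ^ 2) ≤ (4 / d ^ 2 * s) ^ (n - 1) := by
    refine (Finset.prod_le_prod (fun j _ => by positivity) hj).trans ?_
    simp
  calc _ ≤ 1 / s * (4 / d ^ 2 * s) ^ (n - 1) := by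
        apply mul_le_mul hii hp (Finset.prod_nonneg fun j _ => by positivity) (by positivity)
    _ = (4 / d ^ 2) ^ (n - 1) * s ^ (n - 2) := by
        obtain ⟨k, rfl⟩ : ∃ k, n = k + 3 := ⟨n - 3, by omega⟩
        have e1 : k + 3 - 1 = k + 2 := by omega
        have e2 : k + 3 - 2 = k + 1 := by omega
        rw [e1, e2, mul_pow]
        field_simp
        ring
    _ ≤ _ := by
        apply mul_le_mul_of_nonneg_left _ (by positivity)
        calc s ^ (n - 2) ≤ s ^ 1 := pow_le_pow_of_le_one hs.le hs1 (by omega)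
          _ = s := pow_one s

lemma large {n : ℕ} (hn : 3 ≤ n) (x : Fin n → ℝ) :
    ∃ X : ℝ, 0 < X ∧ ∀ m s : ℝ, 0 < s → X ≤ m ^ 2 + s ^ 2 → FF x m s ^ 2 * (m ^ 2 + s ^ 2) ≤ X := by
  refine ⟨16 + 4 * ∑ j, x j ^ 2, by positivity, fun m s hs hX => ?_⟩
  set r := m ^ 2 + s ^ 2 with hr
  have hS : 0 ≤ ∑ j, x j ^ 2 := by positivity
  have hr16 : 16 ≤ r := by linarith
  have hb : ∀ j, s / ((x j - m) ^ 2 + s ^ 2) ≤ 4 * s / r := by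
    intro j
    have h1 : x j ^ 2 ≤ ∑ j, x j ^ 2 :=
      Finset.single_le_sum (f := fun j => x j ^ 2) (fun i _ => sq_nonneg _) (Finset.mem_univ j)
    rw [div_le_div_iff₀ (by positivity) (by positivity)]
    have h2 : r ≤ 4 * ((x j - m) ^ 2 + s ^ 2) := by
      nlinarith [sq_nonneg (2 * x j - m), sq_nonneg (x j - m)]
    nlinarith
  have hF : FF x m s ≤ (4 * s / r) ^ n := by
    unfold FF
    refine (Finset.prod_le_prod (fun j _ => by positivity) (fun j _ => hb j)).trans ?_
    rw [Finset.prod_const, Finset.card_univ, Fintype.card_fin]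
  have hsq : (4 * s / r) ^ 2 ≤ 16 / r := by
    rw [div_pow, div_le_div_iff₀ (by positivity) (by positivity)]
    nlinarith [sq_nonneg m]
  have hF2 : FF x m s ^ 2 ≤ (16 / r) ^ n := by
    calc FF x m s ^ 2 ≤ ((4 * s / r) ^ n) ^ 2 := pow_le_pow_left₀ (FF_pos x m hs).le hF 2
      _ = ((4 * s / r) ^ 2) ^ n := by rw [← pow_mul, ← pow_mul, Nat.mul_comm]
      _ ≤ _ := pow_le_pow_left₀ (by positivity) hsq n
  have hF3 : (16 / r) ^ n ≤ 16 / r := by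
    calc (16 / r) ^ n ≤ (16 / r) ^ 1 :=
          pow_le_pow_of_le_one (by positivity) ((div_le_one (by linarith)).mpr hr16) (by omega)
      _ = _ := pow_one _
  calc _ ≤ 16 / r * r := mul_le_mul_of_nonneg_right (hF2.trans hF3) (by linarith)
    _ = 16 := by field_simp
    _ ≤ _ := by linarith

lemma exists_max {n : ℕ} (hn : 3 ≤ n) (x : Fin n → ℝ) (hx : Function.Injective x) :
    ∃ m s : ℝ, 0 < s ∧ ∀ m' s' : ℝ, 0 < s' → FF x m' s' ≤ FF x m s := by
  obtain ⟨C, hC, h1⟩ := small_s hn x hx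
  obtain ⟨X, hX, h2⟩ := large hn x
  set F0 := FF x 0 1 with hF0
  have hF0p : 0 < F0 := FF_pos x 0 one_pos
  set ε := min 1 (F0 / (2 * C)) with hε
  have hεp : 0 < ε := lt_min one_pos (by positivity)
  set R := X + X / F0 ^ 2 + 1 with hR
  have hRX : X ≤ R := by have : 0 < X / F0 ^ 2 := by positivity
                         linarith
  have out : ∀ m s : ℝ, 0 < s → F0 ≤ FF x m s → ε ≤ s ∧ m ^ 2 + s ^ 2 ≤ R := by
    intro m s hs hF
    constructor
    · by_contra! hlt
      have a1 : s ≤ 1 := hlt.le.trans (min_le_left _ _)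
      have a2 : s ≤ F0 / (2 * C) := hlt.le.trans (min_le_right _ _)
      have a3 := h1 m s hs a1
      rw [le_div_iff₀ (by positivity)] at a2
      linarith
    · by_contra! hlt
      have a1 := h2 m s hs (hRX.trans hlt.le)
      have a2 : F0 ^ 2 ≤ FF x m s ^ 2 := pow_le_pow_left₀ hF0p.le hF 2
      have a3 : F0 ^ 2 * R < X + 0 := by
        calc F0 ^ 2 * R < F0 ^ 2 * (m ^ 2 + s ^ 2) := by gcongr
          _ ≤ FF x m s ^ 2 * (m ^ 2 + s ^ 2) := by gcongr
          _ ≤ X + 0 := by linarith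
      have a4 : F0 ^ 2 * R = F0 ^ 2 * X + X + F0 ^ 2 := by rw [hR]; field_simp
      have : 0 < F0 ^ 2 * X := by positivity
      have : 0 < F0 ^ 2 := by positivity
      linarith
  let K : Set (ℝ × ℝ) := {p | ε ≤ p.2 ∧ p.1 ^ 2 + p.2 ^ 2 ≤ R}
  have hKc : IsCompact K := by
    apply Metric.isCompact_of_isClosed_isBounded
    · exact (isClosed_le continuous_const continuous_snd).inter
        (isClosed_le ((continuous_fst.pow 2).add (continuous_snd.pow 2)) continuous_const)
    · rw [isBounded_iff_forall_norm_le]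
      refine ⟨R + 1, fun p hp => ?_⟩
      have := hp.2
      rw [Prod.norm_def, Real.norm_eq_abs, Real.norm_eq_abs]
      have hR0 : 0 ≤ R := by linarith
      apply max_le
      · refine abs_le_of_sq_le_sq ?_ (by linarith)
        nlinarith [sq_nonneg p.2]
      · refine abs_le_of_sq_le_sq ?_ (by linarith)
        nlinarith [sq_nonneg p.1]
  have hK0 : ((0, 1) : ℝ × ℝ) ∈ K := out 0 1 one_pos le_rfl
  have hcont : ContinuousOn (fun p : ℝ × ℝ => FF x p.1 p.2) K := by
    unfold FF
    apply continuousOn_finsetProd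
    intro i _
    apply ContinuousOn.div (by fun_prop) (by fun_prop)
    intro p hp
    have : 0 < p.2 := hεp.trans_le hp.1
    positivity
  obtain ⟨p, hp, hmax⟩ := hKc.exists_isMaxOn ⟨_, hK0⟩ hcont
  refine ⟨p.1, p.2, hεp.trans_le hp.1, fun m' s' hs' => ?_⟩
  by_cases hF : F0 ≤ FF x m' s'
  · exact hmax (show (m', s') ∈ K from out m' s' hs' hF)
  · exact (not_le.mp hF).le.trans (hmax hK0)

theorem stmt_6 (n : ℕ) (hn : 3 ≤ n) (x : Fin n → ℝ) (hx : Function.Injective x) :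
    ∃ θhat : ℂ, 0 < θhat.im ∧ Qmap x θhat = θhat ∧
      (∀ θ : ℂ, 0 < θ.im → Qmap x θ = θ → θ = θhat) ∧
      (∀ θ : ℂ, 0 < θ.im → cauchyL x θ ≤ cauchyL x θhat) ∧
      (∀ θ : ℂ, 0 < θ.im → cauchyL x θ = cauchyL x θhat → θ = θhat) := by
  obtain ⟨m, s, hs, hmax⟩ := exists_max hn x hx
  have hQ := max_Q hn x hs hmax
  have hpi : 0 < (Real.pi⁻¹) ^ n := by have := Real.pi_pos; positivity
  refine ⟨⟨m, s⟩, hs, hQ, fun θ hθ h => fix_unique hn x hx hθ hs h hQ, fun θ hθ => ?_, fun θ hθ h => ?_⟩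
  · rw [cauchyL_eq, cauchyL_eq]
    exact mul_le_mul_of_nonneg_left (hmax _ _ hθ) hpi.le
  · rw [cauchyL_eq, cauchyL_eq] at h
    have h' : FF x θ.re θ.im = FF x m s := mul_left_cancel₀ hpi.ne' h
    exact fix_unique hn x hx hθ hs (max_Q hn x hθ fun m' s' hs' => h' ▸ hmax m' s' hs') hQ
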